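/- Let d ≥ 1 and let α = (α_1,…,α_d) be a multi-index with α_j > −1 for each j. For every t > 0 and every x ∈ (0,∞)^d, the Poisson–Laguerre kernel has total mass one: ∫_{(0,∞)^d} p_t^α(x,y) dy = 1 (i.e., P_t^α 1 = 1). -/

import Mathlib

open MeasureTheory Real Set

noncomputable def besselI (ν z : ℝ) : ℝ :=
  ∑' m : ℕ, (z / 2) ^ (2 * (m : ℝ) + ν) / (Nat.factorial m * Real.Gamma ((m : ℝ) + ν + 1))

/-- The positive orthant `(0,∞)^d`. -/
def posOrthant (d : ℕ) : Set (Fin d → ℝ) := Set.univ.pi fun _ => Set.Ioi 0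

/-- The Poisson–Laguerre kernel `p_t^α(x,y)`. -/
noncomputable def plKernel (d : ℕ) (α : Fin d → ℝ) (t : ℝ) (x y : Fin d → ℝ) : ℝ :=
  (1 / (2 * Real.sqrt π)) *
    ∫ r in Set.Ioo (0 : ℝ) 1,
      (t * Real.exp (t ^ 2 / (4 * Real.log r)) /
          ((1 - r) ^ d * (-Real.log r) ^ ((3 : ℝ) / 2))) *
        (∏ j, (y j / x j) ^ (α j / 2) *
            Real.exp (-((r * x j + y j) / (1 - r)) - α j * Real.log r / 2) *
            besselI (α j) (2 * Real.sqrt (r * x j * y j) / (1 - r))) / r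

/-- The Poisson–Laguerre semigroup `P_t^α f`, with the convention `P_0^α f = f`. -/
noncomputable def plP (d : ℕ) (α : Fin d → ℝ) (t : ℝ)
    (f : (Fin d → ℝ) → ℝ) (x : Fin d → ℝ) : ℝ :=
  if t = 0 then f x else ∫ y in posOrthant d, plKernel d α t x y * f y

/-!
With `r = exp (-s)`, each one-dimensional factor of the integrand of the Poisson–Laguerre kernel is
`1 - r` times the density of a noncentral gamma distribution: by the series of `I_α`, it is a
mixture of gamma densities of shapes `α + 1 + m`, where `m` has a Poisson distribution, so it has
mass one. The powers of `1 - r` cancel, and the remaining weight in `r` is the density of the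
one-sided `1/2`-stable law of Bochner's subordination formula. The substitution
`r = exp (-t² / (4 v))` turns it into `v ^ (-1 / 2) * exp (-v) / √π`, which has mass
`Γ(1/2) / √π = 1`. Hence the kernel is a mixture of probability densities.
-/

section

open ProbabilityTheory
open scoped NNReal ENNReal Nat

lemma integral_integral_mul_of_integral_eq_one {X Y : Type*} [MeasurableSpace X]
    [MeasurableSpace Y] {μ : Measure X} {ν : Measure Y} [SFinite μ] [SFinite ν] {w : X → ℝ}
    {k : X → Y → ℝ} (hw : Integrable w μ)
    (hk_meas : AEStronglyMeasurable (Function.uncurry k) (μ.prod ν))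
    (hk_nonneg : ∀ x y, 0 ≤ k x y) (hk_one : ∀ᵐ x ∂μ, ∫ y, k x y ∂ν = 1) :
    ∫ y, ∫ x, w x * k x y ∂μ ∂ν = ∫ x, w x ∂μ := by
  have h_int : Integrable (Function.uncurry fun x y => w x * k x y) (μ.prod ν) := by
    refine (integrable_prod_iff (hw.aestronglyMeasurable.comp_fst.mul hk_meas)).2 ⟨?_, ?_⟩
    · filter_upwards [hk_one] with x hx
      exact (integrable_of_integral_eq_one hx).const_mul (w x)
    · refine hw.norm.congr ?_
      filter_upwards [hk_one] with x hx
      simp only [Pi.mul_apply, Function.uncurry_apply_pair, norm_mul,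
        fun y => norm_of_nonneg (hk_nonneg x y), integral_const_mul, hx, mul_one]
  rw [← integral_integral_swap h_int]
  refine integral_congr_ae ?_
  filter_upwards [hk_one] with x hx
  rw [integral_const_mul, hx, mul_one]

lemma rpow_mul_besselI_two_mul_sqrt {u w : ℝ} (hu : 0 < u) (hw : 0 < w) (ν : ℝ) :
    (w / u) ^ (ν / 2) * besselI ν (2 * √(u * w)) =
      ∑' m : ℕ, u ^ m * w ^ ((m : ℝ) + ν) / (m ! * Gamma ((m : ℝ) + ν + 1)) := by
  rw [besselI, ← tsum_mul_left]
  refine tsum_congr fun m => ?_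
  have h_sqrt : √(u * w) ^ (2 * (m : ℝ) + ν) = (u * w) ^ ((m : ℝ) + ν / 2) := by
    rw [sqrt_eq_rpow, ← rpow_mul (by positivity)]
    ring_nf
  rw [mul_div_cancel_left₀ _ two_ne_zero, mul_div_assoc', h_sqrt]
  congr 1
  calc (w / u) ^ (ν / 2) * (u * w) ^ ((m : ℝ) + ν / 2)
      = u ^ m * (w ^ ((m : ℝ) + ν / 2) * w ^ (ν / 2)) := by
        rw [div_rpow hw.le hu.le, mul_rpow hu.le hw.le, rpow_add hu, rpow_natCast]
        field_simp
    _ = u ^ m * w ^ ((m : ℝ) + ν) := by rw [← rpow_add hw]; ring_nf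

/-- The density of the noncentral gamma distribution with shape `a`, rate `b` and noncentrality
`c`, that is, of the mixture of the gamma distributions of shapes `a + m` and rate `b`, where `m` is
Poisson distributed with mean `c`. -/
noncomputable def noncentralGammaPDF (a b : ℝ) (c : ℝ≥0) (y : ℝ) : ℝ≥0∞ :=
  ∫⁻ m : ℕ, gammaPDF (a + m) b y ∂poissonMeasure c

lemma noncentralGammaPDF_eq_tsum (a b : ℝ) (c : ℝ≥0) (y : ℝ) :
    noncentralGammaPDF a b c y =
      ∑' m : ℕ, ENNReal.ofReal (gammaPDFReal (a + m) b y * (exp (-c) * c ^ m / m !)) := by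
  rw [noncentralGammaPDF, lintegral_countable']
  refine tsum_congr fun m => ?_
  rw [poissonMeasure_singleton, gammaPDF, ENNReal.ofReal_mul' (by positivity)]

lemma measurable_noncentralGammaPDF_comp {X : Type*} [MeasurableSpace X] (a : ℝ) {b y : X → ℝ}
    {c : X → ℝ≥0} (hb : Measurable b) (hc : Measurable c) (hy : Measurable y) :
    Measurable fun p => noncentralGammaPDF a (b p) (c p) (y p) := by
  simp only [noncentralGammaPDF_eq_tsum, gammaPDFReal]
  refine Measurable.tsum fun m => Measurable.ennreal_ofReal (Measurable.mul ?_ (by fun_prop))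
  exact Measurable.ite (measurableSet_le measurable_const hy) (by fun_prop) measurable_const

lemma lintegral_noncentralGammaPDF_eq_one {a b : ℝ} (ha : 0 < a) (hb : 0 < b) (c : ℝ≥0) :
    ∫⁻ y, noncentralGammaPDF a b c y = 1 := by
  have h_meas : Measurable (Function.uncurry fun (y : ℝ) (m : ℕ) => gammaPDF (a + m) b y) :=
    measurable_from_prod_countable_left fun m => (measurable_gammaPDFReal (a + m) b).ennreal_ofReal
  unfold noncentralGammaPDF
  rw [lintegral_lintegral_swap h_meas.aemeasurable, lintegral_congr fun m : ℕ =>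
    lintegral_gammaPDF_eq_one (add_pos_of_pos_of_nonneg ha m.cast_nonneg) hb,
    lintegral_one, measure_univ]

lemma noncentralGammaPDF_of_neg (a b : ℝ) (c : ℝ≥0) {y : ℝ} (hy : y < 0) :
    noncentralGammaPDF a b c y = 0 := by
  simp only [noncentralGammaPDF, gammaPDF_of_neg hy, lintegral_zero]

lemma setLIntegral_Ioi_noncentralGammaPDF_eq_one {a b : ℝ} (ha : 0 < a) (hb : 0 < b) (c : ℝ≥0) :
    ∫⁻ y in Ioi 0, noncentralGammaPDF a b c y = 1 := by
  have h_supp : Function.support (noncentralGammaPDF a b c) ⊆ Ici 0 := fun y hy =>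
    not_lt.1 fun h_neg => hy (noncentralGammaPDF_of_neg a b c h_neg)
  rw [setLIntegral_congr Ioi_ae_eq_Ici, setLIntegral_eq_of_support_subset h_supp,
    lintegral_noncentralGammaPDF_eq_one ha hb]

lemma toReal_noncentralGammaPDF {a b y : ℝ} {c : ℝ≥0} (ha : 0 < a) (hb : 0 < b) (hc : 0 < c)
    (hy : 0 < y) :
    (noncentralGammaPDF a b c y).toReal =
      b * exp (-(c + b * y)) *
        ((b * y / c) ^ ((a - 1) / 2) * besselI (a - 1) (2 * √(c * (b * y)))) := by
  rw [rpow_mul_besselI_two_mul_sqrt (NNReal.coe_pos.2 hc) (mul_pos hb hy),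
    noncentralGammaPDF_eq_tsum, ENNReal.tsum_toReal_eq fun _ => ENNReal.ofReal_ne_top,
    ← tsum_mul_left]
  refine tsum_congr fun m => ?_
  have h_shape : 0 < a + m := add_pos_of_pos_of_nonneg ha m.cast_nonneg
  have h_index : (m : ℝ) + (a - 1) = a + m - 1 := by ring
  have h_rpow : b ^ (a + m) = b * b ^ (a + m - 1) := by
    rw [rpow_sub_one hb.ne', mul_div_cancel₀ _ hb.ne']
  rw [ENNReal.toReal_ofReal (mul_nonneg (gammaPDFReal_nonneg h_shape hb y) (by positivity)),
    gammaPDFReal, if_pos hy.le, h_index, sub_add_cancel, mul_rpow hb.le hy.le, neg_add, exp_add,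
    h_rpow]
  ring

/-- For `0 < r < 1` and `0 < x`, the transition density, from `x` to `y` and at time `-log r`, of
the one-dimensional Laguerre heat semigroup of parameter `a`. -/
noncomputable def laguerreHeatPDF (a x r y : ℝ) : ℝ :=
  (noncentralGammaPDF (a + 1) (1 - r)⁻¹ (r * x / (1 - r)).toNNReal y).toReal

lemma measurable_laguerreHeatPDF_comp {X : Type*} [MeasurableSpace X] (a x : ℝ) {r y : X → ℝ}
    (hr : Measurable r) (hy : Measurable y) :
    Measurable fun p => laguerreHeatPDF a x (r p) (y p) :=
  (measurable_noncentralGammaPDF_comp (a + 1) (by fun_prop) (by fun_prop) hy).ennreal_toReal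

lemma laguerreHeatPDF_nonneg (a x r y : ℝ) : 0 ≤ laguerreHeatPDF a x r y :=
  ENNReal.toReal_nonneg

lemma integral_laguerreHeatPDF_eq_one {a r : ℝ} (ha : -1 < a) (x : ℝ) (hr : r < 1) :
    ∫ y in Ioi 0, laguerreHeatPDF a x r y = 1 := by
  have h_mass := setLIntegral_Ioi_noncentralGammaPDF_eq_one (neg_lt_iff_pos_add.1 ha)
    (inv_pos.2 (sub_pos.2 hr)) (r * x / (1 - r)).toNNReal
  have h_meas : Measurable (noncentralGammaPDF (a + 1) (1 - r)⁻¹ (r * x / (1 - r)).toNNReal) :=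
    measurable_noncentralGammaPDF_comp (a + 1) measurable_const measurable_const measurable_id
  unfold laguerreHeatPDF
  rw [integral_toReal h_meas.aemeasurable
    (ae_lt_top h_meas (h_mass.trans_ne ENNReal.one_ne_top)), h_mass, ENNReal.toReal_one]

lemma rpow_mul_exp_mul_besselI_eq_laguerreHeatPDF {a x r y : ℝ} (ha : -1 < a) (hx : 0 < x)
    (hr : r ∈ Ioo 0 1) (hy : 0 < y) :
    (y / x) ^ (a / 2) * exp (-((r * x + y) / (1 - r)) - a * log r / 2) *
        besselI a (2 * √(r * x * y) / (1 - r)) =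
      (1 - r) * laguerreHeatPDF a x r y := by
  have h_r : 0 < r := hr.1
  have h_sub : 0 < 1 - r := sub_pos.2 hr.2
  have h_c : 0 < r * x / (1 - r) := by positivity
  have h_sqrt : √(r * x / (1 - r) * ((1 - r)⁻¹ * y)) = √(r * x * y) / (1 - r) := by
    rw [← sqrt_sq h_sub.le, ← sqrt_div' _ (sq_nonneg _), sqrt_sq h_sub.le]
    congr 1
    field_simp
  have h_rpow : ((1 - r)⁻¹ * y / (r * x / (1 - r))) ^ (a / 2) =
      (y / x) ^ (a / 2) * exp (-(a * log r / 2)) := by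
    rw [show (1 - r)⁻¹ * y / (r * x / (1 - r)) = y / x / r by field_simp,
      div_rpow (by positivity) h_r.le, rpow_def_of_pos h_r, div_eq_mul_inv, ← exp_neg]
    ring_nf
  have h_exponent : r * x / (1 - r) + (1 - r)⁻¹ * y = (r * x + y) / (1 - r) := by ring
  rw [laguerreHeatPDF, toReal_noncentralGammaPDF (neg_lt_iff_pos_add.1 ha) (inv_pos.2 h_sub)
    (toNNReal_pos.2 h_c) hy, coe_toNNReal _ h_c.le, add_sub_cancel_right, h_sqrt, h_rpow,
    sub_eq_add_neg (-((r * x + y) / (1 - r))), exp_add, h_exponent, mul_div_assoc 2]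
  field_simp

/-- The density, in the variable `r = exp (-s)`, of the one-sided `1/2`-stable law on the times
`s > 0` that subordinates the Poisson semigroup at time `t` to the heat semigroup. -/
noncomputable def subordinationPDF (t r : ℝ) : ℝ :=
  1 / (2 * √π) * (t * exp (t ^ 2 / (4 * log r)) / (-log r) ^ ((3 : ℝ) / 2)) / r

lemma image_exp_neg_div_Ioi {c : ℝ} (hc : 0 < c) :
    (fun v => exp (-(c / v))) '' Ioi 0 = Ioo 0 1 := by
  ext r
  constructor
  · rintro ⟨v, hv, rfl⟩
    exact ⟨exp_pos _, exp_lt_one_iff.2 (neg_lt_zero.2 (div_pos hc hv))⟩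
  · rintro ⟨h_pos, h_lt_one⟩
    refine ⟨c / -log r, div_pos hc (neg_pos.2 (log_neg h_pos h_lt_one)), ?_⟩
    simp only [div_div_cancel₀ hc.ne', neg_neg, exp_log h_pos]

lemma injective_exp_neg_div {c : ℝ} (hc : c ≠ 0) : Function.Injective fun v => exp (-(c / v)) := by
  intro v w h
  simpa [div_eq_mul_inv, hc] using h

lemma hasDerivAt_exp_neg_div (c : ℝ) {v : ℝ} (hv : v ≠ 0) :
    HasDerivAt (fun v => exp (-(c / v))) (exp (-(c / v)) * (c / v ^ 2)) v := by
  have h := ((hasDerivAt_inv hv).const_mul c).fun_neg.exp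
  simp only [← div_eq_mul_inv] at h
  convert h using 1
  field_simp

lemma integral_Ioo_zero_one_eq_integral_comp_exp_neg_div {E : Type*} [NormedAddCommGroup E]
    [NormedSpace ℝ E] {c : ℝ} (hc : 0 < c) (g : ℝ → E) :
    ∫ r in Ioo 0 1, g r =
      ∫ v in Ioi 0, (exp (-(c / v)) * (c / v ^ 2)) • g (exp (-(c / v))) := by
  rw [← image_exp_neg_div_Ioi hc, integral_image_eq_integral_abs_deriv_smul measurableSet_Ioi
    (fun v hv => (hasDerivAt_exp_neg_div c (ne_of_gt hv)).hasDerivWithinAt)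
    (injective_exp_neg_div hc.ne').injOn]
  refine setIntegral_congr_fun measurableSet_Ioi fun v _ => ?_
  have h_nonneg : 0 ≤ exp (-(c / v)) * (c / v ^ 2) := by positivity
  simp only [abs_of_nonneg h_nonneg]

lemma smul_subordinationPDF_exp_neg_div {t v : ℝ} (ht : 0 < t) (hv : 0 < v) :
    (exp (-(t ^ 2 / 4 / v)) * (t ^ 2 / 4 / v ^ 2)) • subordinationPDF t (exp (-(t ^ 2 / 4 / v))) =
      1 / √π * (exp (-v) * v ^ ((1 / 2 : ℝ) - 1)) := by
  have h_exponent : t ^ 2 / (4 * -(t ^ 2 / 4 / v)) = -v := by field_simp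
  have h_rpow : (t ^ 2 / 4 / v) ^ ((3 : ℝ) / 2) = (t / 2) ^ 3 / (v * v ^ (1 / 2 : ℝ)) := by
    rw [show t ^ 2 / 4 / v = (t / 2) ^ 2 / v by ring, div_rpow (by positivity) hv.le,
      ← rpow_natCast_mul (by positivity), ← rpow_one_add' hv.le (by norm_num),
      ← rpow_natCast (t / 2) 3]
    norm_num
  rw [smul_eq_mul, subordinationPDF, log_exp, neg_neg, h_exponent, h_rpow, rpow_sub hv, rpow_one]
  field_simp
  norm_num

lemma integral_subordinationPDF_eq_one {t : ℝ} (ht : 0 < t) :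
    ∫ r in Ioo 0 1, subordinationPDF t r = 1 := by
  rw [integral_Ioo_zero_one_eq_integral_comp_exp_neg_div (by positivity : 0 < t ^ 2 / 4),
    setIntegral_congr_fun measurableSet_Ioi fun v hv => smul_subordinationPDF_exp_neg_div ht hv,
    integral_const_mul, ← Gamma_eq_integral one_half_pos, Gamma_one_half_eq]
  exact one_div_mul_cancel (by positivity)

lemma measurableSet_posOrthant (d : ℕ) : MeasurableSet (posOrthant d) :=
  MeasurableSet.univ_pi fun _ => measurableSet_Ioi

lemma measurable_uncurry_prod_laguerreHeatPDF {ι : Type*} [Fintype ι] (α x : ι → ℝ) :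
    Measurable (Function.uncurry fun (r : ℝ) (y : ι → ℝ) =>
      ∏ j, laguerreHeatPDF (α j) (x j) r (y j)) :=
  Finset.measurable_fun_prod _ fun j _ => measurable_laguerreHeatPDF_comp (α j) (x j)
    measurable_fst ((measurable_pi_apply j).comp measurable_snd)

lemma integral_prod_laguerreHeatPDF_eq_one {d : ℕ} {α : Fin d → ℝ} (hα : ∀ j, -1 < α j)
    (x : Fin d → ℝ) {r : ℝ} (hr : r < 1) :
    ∫ y in posOrthant d, ∏ j, laguerreHeatPDF (α j) (x j) r (y j) = 1 := by
  rw [posOrthant, volume_pi, Measure.restrict_pi_pi,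
    integral_fintype_prod_eq_prod fun j => laguerreHeatPDF (α j) (x j) r]
  exact Finset.prod_eq_one fun j _ => integral_laguerreHeatPDF_eq_one (hα j) (x j) hr

lemma plKernel_eq_integral_subordinationPDF_mul_prod {d : ℕ} {α : Fin d → ℝ}
    (hα : ∀ j, -1 < α j) (t : ℝ) {x y : Fin d → ℝ} (hx : x ∈ posOrthant d)
    (hy : y ∈ posOrthant d) :
    plKernel d α t x y =
      ∫ r in Ioo 0 1, subordinationPDF t r * ∏ j, laguerreHeatPDF (α j) (x j) r (y j) := by
  rw [plKernel, ← integral_const_mul]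
  refine setIntegral_congr_fun measurableSet_Ioo fun r hr => ?_
  have h_sub : 1 - r ≠ 0 := (sub_pos.2 hr.2).ne'
  have h_factor (j : Fin d) := rpow_mul_exp_mul_besselI_eq_laguerreHeatPDF (hα j)
    (hx j (mem_univ j)) hr (hy j (mem_univ j))
  rw [Finset.prod_congr rfl fun j _ => h_factor j, Finset.prod_mul_distrib, Finset.prod_const,
    Finset.card_univ, Fintype.card_fin, subordinationPDF]
  field_simp

end

theorem laguerre_poisson_kernel_total_mass_one
    (d : ℕ) (hd : 1 ≤ d) (α : Fin d → ℝ) (hα : ∀ j, -1 < α j) :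
    ∀ t > (0 : ℝ), ∀ x ∈ posOrthant d,
      (∫ y in posOrthant d, plKernel d α t x y) = 1 := by
  intro t ht x hx
  have h_weight := integral_subordinationPDF_eq_one ht
  calc ∫ y in posOrthant d, plKernel d α t x y
      = ∫ y in posOrthant d, ∫ r in Ioo 0 1,
          subordinationPDF t r * ∏ j, laguerreHeatPDF (α j) (x j) r (y j) :=
        setIntegral_congr_fun (measurableSet_posOrthant d) fun y hy =>
          plKernel_eq_integral_subordinationPDF_mul_prod hα t hx hy
    _ = ∫ r in Ioo 0 1, subordinationPDF t r :=
        integral_integral_mul_of_integral_eq_one (integrable_of_integral_eq_one h_weight)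
          (measurable_uncurry_prod_laguerreHeatPDF α x).aestronglyMeasurable
          (fun r y => Finset.prod_nonneg fun j _ => laguerreHeatPDF_nonneg (α j) (x j) r (y j))
          (ae_restrict_of_forall_mem measurableSet_Ioo fun r hr =>
            integral_prod_laguerreHeatPDF_eq_one hα x hr.2)
    _ = 1 := h_weight
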